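/- Necessity of the termination assumption: there exist a transition system (a type S of states, a total successor relation step, a set Term of terminal states whose only successor is themselves, and a cost valuation c : S → ℤ), a state s₀ ∈ S, and a map χ : S → ℝ satisfying the insufficiency preservation condition at every state reachable from s₀ and the insufficiency on termination condition at every terminal state reachable from s₀, such that: no run from s₀ ever visits a terminal state; along every run ρ from s₀ the sequence c(ρ n) − c(s₀) is eventually constant with limit 6 (so the total incurred cost of every run from s₀ is 6); and χ(s₀) = 7 > 6. Hence without the termination assumption an anti-potential function need not lower-bound the incurred cost. -/

import Mathlib

/-- A run of the transition system from state `s`. -/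
def IsRun {S : Type*} (step : S → S → Prop) (s : S) (ρ : ℕ → S) : Prop :=
  ρ 0 = s ∧ ∀ n, step (ρ n) (ρ (n + 1))

/-- `s'` is reachable from `s`. -/
def ReachableFrom {S : Type*} (step : S → S → Prop) (s s' : S) : Prop :=
  ∃ ρ n, IsRun step s ρ ∧ ρ n = s'

/-- `s'` is reachable from some initial state in `Init`. -/
def Reachable {S : Type*} (step : S → S → Prop) (Init : Set S) (s' : S) : Prop :=
  ∃ s ∈ Init, ReachableFrom step s s'

/-- The system is terminating: every run from a reachable state visits a terminal state. -/
def Terminating {S : Type*} (step : S → S → Prop) (Term Init : Set S) : Prop :=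
  ∀ s, Reachable step Init s → ∀ ρ, IsRun step s ρ → ∃ n, ρ n ∈ Term

/-- The cost of a run: `c (ρ N) - c (ρ 0)` where `N` is the least index with `ρ N ∈ Term`. -/
noncomputable def RunCost {S : Type*} (Term : Set S) (c : S → ℤ) (ρ : ℕ → S) : ℤ :=
  c (ρ (sInf {n | ρ n ∈ Term})) - c (ρ 0)

/-- Potential function: sufficiency preservation and sufficiency on termination. -/
def IsPF {S : Type*} (step : S → S → Prop) (Term Init : Set S) (c : S → ℤ)
    (φ : S → ℝ) : Prop :=
  (∀ s s', Reachable step Init s → step s s' →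
    φ s ≥ φ s' + ((c s' : ℝ) - (c s : ℝ))) ∧
  (∀ s, Reachable step Init s → s ∈ Term → φ s ≥ 0)

/-- Anti-potential function: insufficiency preservation and insufficiency on termination. -/
def IsAntiPF {S : Type*} (step : S → S → Prop) (Term Init : Set S) (c : S → ℤ)
    (χ : S → ℝ) : Prop :=
  (∀ s s', Reachable step Init s → step s s' →
    χ s ≤ χ s' + ((c s' : ℝ) - (c s : ℝ))) ∧
  (∀ s, Reachable step Init s → s ∈ Term → χ s ≤ 0)

/-!
Insufficiency preservation is invariant under adding a constant to `χ`; only insufficiency on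
termination bounds that constant. When no terminal state is reachable the constant
is free: `b + c s₀ - c` preserves insufficiency with equality and takes the arbitrary value `b`
at `s₀`. So any system that settles into an idle loop after incurring cost `6` is a counterexample.
-/

theorem reachable_singleton {S : Type*} {step : S → S → Prop} {s₀ s : S} :
    Reachable step {s₀} s ↔ ReachableFrom step s₀ s := by
  simp only [Reachable, Set.mem_singleton_iff, exists_eq_left]

theorem exists_isAntiPF_apply_eq {S : Type*} {step : S → S → Prop} {Term : Set S} {s₀ : S}
    (avoids : ∀ ρ, IsRun step s₀ ρ → ∀ n, ρ n ∉ Term) (c : S → ℤ) (b : ℝ) :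
    ∃ χ : S → ℝ, IsAntiPF step Term {s₀} c χ ∧ χ s₀ = b := by
  refine ⟨fun s ↦ b + c s₀ - c s, ⟨fun s s' _ _ ↦ ?preservation, fun s hs hterm ↦ ?termination⟩,
    add_sub_cancel_right b _⟩
  case preservation => exact le_of_eq (by ring)
  case termination =>
    obtain ⟨ρ, n, hρ, rfl⟩ := reachable_singleton.mp hs
    exact absurd hterm (avoids ρ hρ n)

/-- The states of a program that performs one transition and then loops forever, together with a
terminal state `halted` that the program never enters. -/
inductive LoopState : Type
  | start
  | looping
  | halted

namespace LoopState

/-- The transition relation of the looping program; `halted` has a self-loop because every state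
must have a successor. -/
inductive Step : LoopState → LoopState → Prop
  | enter : Step start looping
  | loop : Step looping looping
  | halt : Step halted halted

/-- The cost valuation of the looping program: the transition out of `start` incurs cost `6`.
The value at the unreachable state `halted` is immaterial. -/
def cost : LoopState → ℤ
  | start => 0
  | looping => 6
  | halted => 0

theorem exists_step : ∀ s : LoopState, ∃ s', Step s s'
  | start => ⟨looping, .enter⟩
  | looping => ⟨looping, .loop⟩
  | halted => ⟨halted, .halt⟩

theorem Step.eq_halted {s : LoopState} (h : Step halted s) : s = halted := by
  cases h
  rfl

theorem Step.eq_looping {s s' : LoopState} (h : Step s s') (hs : s ≠ halted) : s' = looping := by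
  cases h with
  | enter | loop => rfl
  | halt => exact absurd rfl hs

theorem run_ne_halted {ρ : ℕ → LoopState} (hρ : IsRun Step start ρ) (n : ℕ) : ρ n ≠ halted := by
  induction n with
  | zero => simp [hρ.1]
  | succ n ih => simp [(hρ.2 n).eq_looping ih]

theorem run_succ_eq_looping {ρ : ℕ → LoopState} (hρ : IsRun Step start ρ) (n : ℕ) :
    ρ (n + 1) = looping :=
  (hρ.2 n).eq_looping (run_ne_halted hρ n)

theorem cost_run_sub_cost_start {ρ : ℕ → LoopState} (hρ : IsRun Step start ρ) {n : ℕ}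
    (hn : 1 ≤ n) : cost (ρ n) - cost start = 6 := by
  obtain ⟨m, rfl⟩ := Nat.exists_eq_add_of_le' hn
  rw [run_succ_eq_looping hρ m]
  rfl

end LoopState

/-- necessity of the termination assumption. There is a (non-terminating)
transition system with a map `χ` satisfying insufficiency preservation and insufficiency
on termination at all states reachable from `s₀`, such that every run from `s₀` avoids
terminal states, every run incurs total cost exactly `6`, yet `χ s₀ = 7 > 6`. -/
theorem antipotential_needs_termination :
    ∃ (S : Type) (step : S → S → Prop) (Term : Set S) (c : S → ℤ) (s₀ : S) (χ : S → ℝ),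
      (∀ s : S, ∃ s', step s s') ∧
      (∀ s ∈ Term, ∀ s', step s s' → s' = s) ∧
      (∀ s s', ReachableFrom step s₀ s → step s s' →
        χ s ≤ χ s' + ((c s' : ℝ) - (c s : ℝ))) ∧
      (∀ s, ReachableFrom step s₀ s → s ∈ Term → χ s ≤ 0) ∧
      (∀ ρ : ℕ → S, IsRun step s₀ ρ → ∀ n, ρ n ∉ Term) ∧
      (∀ ρ : ℕ → S, IsRun step s₀ ρ → ∃ N, ∀ n ≥ N, c (ρ n) - c s₀ = 6) ∧
      χ s₀ = 7 ∧ (7 : ℝ) > 6 := by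
  have avoids : ∀ ρ, IsRun LoopState.Step .start ρ → ∀ n, ρ n ∉ ({.halted} : Set LoopState) :=
    fun _ hρ ↦ LoopState.run_ne_halted hρ
  obtain ⟨χ, ⟨preservation, termination⟩, χ_start⟩ :=
    exists_isAntiPF_apply_eq avoids LoopState.cost 7
  simp only [reachable_singleton] at preservation termination
  have halted_absorbing :
      ∀ s ∈ ({.halted} : Set LoopState), ∀ s', LoopState.Step s s' → s' = s := by
    rintro _ rfl _ h
    exact h.eq_halted
  exact ⟨LoopState, LoopState.Step, {.halted}, LoopState.cost, .start, χ, LoopState.exists_step,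
    halted_absorbing, preservation, termination, avoids,
    fun _ hρ ↦ ⟨1, fun _ hn ↦ LoopState.cost_run_sub_cost_start hρ hn⟩, χ_start, by norm_num⟩
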